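/- arXiv:1701.03773 — 2 statements merged into one kernel-verified Lean document; each statement's English description precedes it below -/
import Mathlib

section
/- If a Λ-structure (with all operators unary) is finitary one-step compact and every operator ♥ ∈ Λ is k_♥-bounded for some k_♥ ∈ ℕ, then it has quasi-ultraproducts: for every ultrafilter 𝔘 on a set I and every family (X_i, ξ_i)_{i∈I} of T-coalgebras on nonempty sets X_i, there exists a T-coalgebra structure ξ on the ultraproduct ∏_𝔘 X_i making it a quasi-ultraproduct of the family. -/
namespace CPL

/-- A Λ-structure: a `Set`-endofunctor `T` together with a natural predicate lifting
for every modal operator. -/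
structure LambdaStructure (Λ : Type) (ar : Λ → ℕ) : Type 1 where
  T : Type → Type
  map : {C D : Type} → (C → D) → T C → T D
  lift : (ℓ : Λ) → (C : Type) → (Fin (ar ℓ) → Set C) → Set (T C)
  natural : ∀ {C D : Type} (f : C → D) (ℓ : Λ) (A : Fin (ar ℓ) → Set D) (t : T C),
      map f t ∈ lift ℓ D A ↔ t ∈ lift ℓ C fun i => f ⁻¹' A i

/-- Formulas of coalgebraic predicate logic `CPL(Λ,Σ)`. -/
inductive Formula (Λ : Type) (ar : Λ → ℕ) (Sig : Type) (arP : Sig → ℕ) (V : Type) : Type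
  | eq : V → V → Formula Λ ar Sig arP V
  | pred : (P : Sig) → (Fin (arP P) → V) → Formula Λ ar Sig arP V
  | bot : Formula Λ ar Sig arP V
  | imp : Formula Λ ar Sig arP V → Formula Λ ar Sig arP V → Formula Λ ar Sig arP V
  | all : V → Formula Λ ar Sig arP V → Formula Λ ar Sig arP V
  | heart : V → (ℓ : Λ) → (Fin (ar ℓ) → V) → (Fin (ar ℓ) → Formula Λ ar Sig arP V) →
      Formula Λ ar Sig arP V

variable {Λ : Type} {ar : Λ → ℕ} {Sig : Type} {arP : Sig → ℕ} {V : Type}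

def Formula.notF (φ : Formula Λ ar Sig arP V) : Formula Λ ar Sig arP V := φ.imp .bot

def Formula.orF (φ ψ : Formula Λ ar Sig arP V) : Formula Λ ar Sig arP V := (φ.imp .bot).imp ψ

def Formula.andF (φ ψ : Formula Λ ar Sig arP V) : Formula Λ ar Sig arP V := (φ.imp ψ.notF).notF

def Formula.iffF (φ ψ : Formula Λ ar Sig arP V) : Formula Λ ar Sig arP V :=
  (φ.imp ψ).andF (ψ.imp φ)

def Formula.exF (x : V) (φ : Formula Λ ar Sig arP V) : Formula Λ ar Sig arP V :=
  (Formula.all x φ.notF).notF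

def bigOr (l : List (Formula Λ ar Sig arP V)) : Formula Λ ar Sig arP V :=
  l.foldr Formula.orF .bot

def bigAnd (l : List (Formula Λ ar Sig arP V)) : Formula Λ ar Sig arP V :=
  l.foldr Formula.andF (Formula.bot.notF)

def allList (ys : List V) (φ : Formula Λ ar Sig arP V) : Formula Λ ar Sig arP V :=
  ys.foldr Formula.all φ

def exList (ys : List V) (φ : Formula Λ ar Sig arP V) : Formula Λ ar Sig arP V :=
  ys.foldr Formula.exF φ

/-- Free variables of a CPL formula. -/
def Formula.freeVars : Formula Λ ar Sig arP V → Set V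
  | .eq a b => {a, b}
  | .pred _ xs => Set.range xs
  | .bot => ∅
  | .imp φ ψ => φ.freeVars ∪ ψ.freeVars
  | .all x φ => φ.freeVars \ {x}
  | .heart x _ ys φs => insert x (⋃ i, ((φs i).freeVars \ {ys i}))

variable [DecidableEq V]

/-- Substitution `φ[t/x]` of the variable `t` for the variable `x` (terms are variables). -/
def Formula.subst : Formula Λ ar Sig arP V → V → V → Formula Λ ar Sig arP V
  | .eq a b, t, x => .eq (if a = x then t else a) (if b = x then t else b)
  | .pred P xs, t, x => .pred P fun i => if xs i = x then t else xs i
  | .bot, _, _ => .bot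
  | .imp φ ψ, t, x => .imp (φ.subst t x) (ψ.subst t x)
  | .all y φ, t, x => if y = x then .all y φ else .all y (φ.subst t x)
  | .heart z ℓ ys φs, t, x =>
      .heart (if z = x then t else z) ℓ ys fun i => if ys i = x then φs i else (φs i).subst t x

/-- Substitutability of the variable `t` for the variable `x` (Enderton-style). -/
def Formula.Substitutable (t x : V) : Formula Λ ar Sig arP V → Prop
  | .eq _ _ => True
  | .pred _ _ => True
  | .bot => True
  | .imp φ ψ => φ.Substitutable t x ∧ ψ.Substitutable t x
  | .all y φ => t ∉ (Formula.all y φ).freeVars ∨ (t ≠ y ∧ φ.Substitutable t x)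
  | .heart _ _ ys φs =>
      ∀ i, t ∉ ((φs i).freeVars \ {ys i}) ∨ (t ≠ ys i ∧ (φs i).Substitutable t x)

/-- Satisfaction in a coalgebraic model (given by a coalgebra `γ` and an
interpretation `I` of the predicate symbols). -/
def Sat (S : LambdaStructure Λ ar) {C : Type} (γ : C → S.T C)
    (I : (P : Sig) → (Fin (arP P) → C) → Prop) :
    (V → C) → Formula Λ ar Sig arP V → Prop
  | v, .eq a b => v a = v b
  | v, .pred P xs => I P fun i => v (xs i)
  | _, .bot => False
  | v, .imp φ ψ => Sat S γ I v φ → Sat S γ I v ψ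
  | v, .all x φ => ∀ c : C, Sat S γ I (Function.update v x c) φ
  | v, .heart x ℓ ys φs =>
      γ (v x) ∈ S.lift ℓ C fun i => {c : C | Sat S γ I (Function.update v (ys i) c) (φs i)}


/-- Boolean (propositional) formulas over a set `α` of atoms. -/
inductive PropForm (α : Type) : Type
  | var : α → PropForm α
  | bot : PropForm α
  | imp : PropForm α → PropForm α → PropForm α

namespace PropForm

def neg {α : Type} (A : PropForm α) : PropForm α := A.imp .bot

def orP {α : Type} (A B : PropForm α) : PropForm α := (A.imp .bot).imp B

def vars {α : Type} : PropForm α → Set α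
  | .var a => {a}
  | .bot => ∅
  | .imp A B => A.vars ∪ B.vars

def bind {α β : Type} (f : α → PropForm β) : PropForm α → PropForm β
  | .var a => f a
  | .bot => .bot
  | .imp A B => .imp (A.bind f) (B.bind f)

end PropForm

/-- Evaluation of Boolean formulas in the Boolean algebra `𝒫 C`. -/
def pEval {α C : Type} (f : α → Set C) : PropForm α → Set C
  | .var a => f a
  | .bot => ∅
  | .imp A B => (pEval f A)ᶜ ∪ pEval f B

/-- Evaluation of Boolean formulas under a valuation of atoms by propositions. -/
def pHolds {α : Type} (w : α → Prop) : PropForm α → Prop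
  | .var a => w a
  | .bot => False
  | .imp A B => pHolds w A → pHolds w B

/-- A modal literal `♥ p₁ … pₙ` over schematic variables. -/
abbrev ModalLit (Λ : Type) (ar : Λ → ℕ) (sVar : Type) : Type := (ℓ : Λ) × (Fin (ar ℓ) → sVar)

/-- A one-step rule `A / P`, with `P` represented as a list of signed modal literals. -/
structure OneStepRule (Λ : Type) (ar : Λ → ℕ) (sVar : Type) : Type where
  prem : PropForm sVar
  lits : List (Bool × ModalLit Λ ar sVar)

variable {Λ : Type} {ar : Λ → ℕ} {sVar : Type}

/-- Well-formedness of one-step rules: every schematic variable occurs at most once in the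
conclusion, and every schematic variable of the premise occurs in the conclusion. -/
def OneStepRule.WF (R : OneStepRule Λ ar sVar) : Prop :=
  ((R.lits.map fun l => List.ofFn l.2.2).flatten).Nodup ∧
    R.prem.vars ⊆ {p | ∃ l ∈ R.lits, ∃ j, l.2.2 j = p}

def litSet (S : LambdaStructure Λ ar) (C : Type) (τ : sVar → Set C)
    (l : Bool × ModalLit Λ ar sVar) : Set (S.T C) :=
  if l.1 then S.lift l.2.1 C (fun j => τ (l.2.2 j)) else (S.lift l.2.1 C (fun j => τ (l.2.2 j)))ᶜ

/-- One-step soundness of a one-step rule. -/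
def OneStepSound (S : LambdaStructure Λ ar) (R : OneStepRule Λ ar sVar) : Prop :=
  ∀ (C : Type) (τ : sVar → Set C), pEval τ R.prem = Set.univ →
    (⋃ l ∈ R.lits, litSet S C τ l) = Set.univ

/-- `♥` is `k`-bounded in its `i`-th argument. -/
def BoundedAt (S : LambdaStructure Λ ar) (ℓ : Λ) (i : Fin (ar ℓ)) (k : ℕ) : Prop :=
  ∀ (C : Type) (A : Fin (ar ℓ) → Set C) (t : S.T C),
    t ∈ S.lift ℓ C A ↔
      ∃ B : Set C, B ⊆ A i ∧ B.Finite ∧ B.ncard ≤ k ∧ t ∈ S.lift ℓ C (Function.update A i B)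



section Ultraproducts

variable {I : Type}

/-- The setoid underlying the ultraproduct `∏_𝔘 X_i`. -/
def upSetoid (𝔘 : Ultrafilter I) (X : I → Type) : Setoid (∀ i, X i) where
  r x y := {i | x i = y i} ∈ 𝔘
  iseqv := by
    refine ⟨fun x => ?_, fun {x y} h => ?_, fun {x y z} hxy hyz => ?_⟩
    · have : {i | x i = x i} = Set.univ := by ext i; simp
      rw [this]; exact Filter.univ_mem
    · have : {i | x i = y i} = {i | y i = x i} := by ext i; exact eq_comm
      rwa [this] at h
    · exact Filter.mem_of_superset (Filter.inter_mem hxy hyz)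
        (fun i hi => hi.1.trans hi.2)

/-- The ultraproduct `∏_𝔘 X_i` of a family of sets. -/
def UProd (𝔘 : Ultrafilter I) (X : I → Type) : Type := Quotient (upSetoid 𝔘 X)

/-- The equivalence class of a family. -/
def upMk (𝔘 : Ultrafilter I) (X : I → Type) (x : ∀ i, X i) : UProd 𝔘 X :=
  Quotient.mk (upSetoid 𝔘 X) x

/-- The admissible subset `∏_𝔘 A_i = {x | {i | x_i ∈ A_i} ∈ 𝔘}` of the ultraproduct. -/
def admSet (𝔘 : Ultrafilter I) (X : I → Type) (A : ∀ i, Set (X i)) : Set (UProd 𝔘 X) :=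
  {c | Quotient.liftOn c (fun x => {i | x i ∈ A i} ∈ 𝔘) (by
    intro x y h
    refine propext ⟨fun hx => ?_, fun hy => ?_⟩
    · refine Filter.mem_of_superset (Filter.inter_mem h hx) (fun i hi => ?_)
      have h1 : x i = y i := hi.1
      have h2 : x i ∈ A i := hi.2
      simpa [h1] using h2
    · refine Filter.mem_of_superset (Filter.inter_mem h hy) (fun i hi => ?_)
      have h1 : x i = y i := hi.1
      have h2 : y i ∈ A i := hi.2
      simpa [h1] using h2)}

end Ultraproducts

section QuasiUltraproducts

variable {I : Type}

/-- `ξ` is a quasi-ultraproduct of the `T`-coalgebras `(X_i, ξ_i)` w.r.t. `𝔘`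
(for a similarity type with unary operators): for every family of subsets `A_i ⊆ X_i`,
every `x ∈ ∏_𝔘 X_i` and every `♥ ∈ Λ`,
`ξ(x) ∈ ⟦♥⟧(∏_𝔘 A_i)` iff `{i | ξ_i(x_i) ∈ ⟦♥⟧(A_i)} ∈ 𝔘`. -/
def IsQUPCoalg (S : LambdaStructure Λ ar) (𝔘 : Ultrafilter I) (X : I → Type)
    (ξi : ∀ i, X i → S.T (X i)) (ξ : UProd 𝔘 X → S.T (UProd 𝔘 X)) : Prop :=
  ∀ (A : ∀ i, Set (X i)) (x : ∀ i, X i) (ℓ : Λ),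
    ξ (upMk 𝔘 X x) ∈ S.lift ℓ (UProd 𝔘 X) (fun _ => admSet 𝔘 X A) ↔
      {i | ξi i (x i) ∈ S.lift ℓ (X i) (fun _ => A i)} ∈ 𝔘

/-- The predicate interpretation `J` on the ultraproduct is the standard ultraproduct of
the component interpretations `I_i`. -/
def IsQUPPred (𝔘 : Ultrafilter I) (X : I → Type)
    (Ii : ∀ i, (P : Sig) → (Fin (arP P) → X i) → Prop)
    (J : (P : Sig) → (Fin (arP P) → UProd 𝔘 X) → Prop) : Prop :=
  ∀ (P : Sig) (a : Fin (arP P) → ∀ i, X i),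
    J P (fun j => upMk 𝔘 X (a j)) ↔ {i | Ii i P (fun j => a j i)} ∈ 𝔘

end QuasiUltraproducts

section OneStepCompactness

/-- Satisfaction of a one-step formula (a Boolean combination of expressions `♥A`, `A ⊆ X`)
by an element `t ∈ TX` (unary operators). -/
def osSat (S : LambdaStructure Λ ar) (X : Type) (t : S.T X) (A : PropForm (Λ × Set X)) :
    Prop :=
  t ∈ pEval (fun l => S.lift l.1 X fun _ => l.2) A

/-- A `Λ`-structure is one-step compact: every finitely satisfiable set of one-step
formulas over any set `X` is satisfiable. -/
def OneStepCompact (S : LambdaStructure Λ ar) : Prop :=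
  ∀ (X : Type) (Φ : Set (PropForm (Λ × Set X))),
    (∀ Φ₀ ⊆ Φ, Φ₀.Finite → ∃ t : S.T X, ∀ A ∈ Φ₀, osSat S X t A) →
    ∃ t : S.T X, ∀ A ∈ Φ, osSat S X t A

/-- Satisfaction of a finitary one-step formula (atoms `♥B` with `B ⊆ X` finite). -/
def osSatFin (S : LambdaStructure Λ ar) (X : Type) (t : S.T X)
    (A : PropForm (Λ × Finset X)) : Prop :=
  t ∈ pEval (fun l => S.lift l.1 X fun _ => (l.2 : Set X)) A

/-- A `Λ`-structure is finitary one-step compact: every finitely satisfiable set of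
one-step formulas over finite subsets of any set `X` is satisfiable. -/
def FinitaryOneStepCompact (S : LambdaStructure Λ ar) : Prop :=
  ∀ (X : Type) (Φ : Set (PropForm (Λ × Finset X))),
    (∀ Φ₀ ⊆ Φ, Φ₀.Finite → ∃ t : S.T X, ∀ A ∈ Φ₀, osSatFin S X t A) →
    ∃ t : S.T X, ∀ A ∈ Φ, osSatFin S X t A

end OneStepCompactness

/-- The unary modal operator `ℓ` is `k`-bounded. -/
def KBounded1 (S : LambdaStructure Λ ar) (ℓ : Λ) (k : ℕ) : Prop :=
  ∀ (X : Type) (A : Set X) (t : S.T X),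
    t ∈ S.lift ℓ X (fun _ => A) ↔
      ∃ B : Set X, B ⊆ A ∧ B.Finite ∧ B.ncard ≤ k ∧ t ∈ S.lift ℓ X (fun _ => B)

/-!
Fix representatives of the elements of the ultraproduct `∏_𝔘 X_i`; the `i`-th coordinate is then a
map from the ultraproduct to `X_i`, and for `𝔘`-almost all `i` it is surjective, and injective on a
given finite set `F`. For such `i` it has a section `f : X_i → ∏_𝔘 X_i` with
`f⁻¹ B = {b_i | b ∈ B}` for all `B ⊆ F`, so by naturality `T f` carries `t_i` to an element with
the same behaviour on the subsets of `F` as `t_i` has on their coordinates. Compactness glues these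
elements into some `u` with `u ∈ ⟦♥⟧ B` iff `t_i ∈ ⟦♥⟧ {b_i | b ∈ B}` for almost all `i`, for all
finite `B`. Boundedness extends this to the sets `∏_𝔘 A_i`, since the ultraproduct of sets with at
most `k` elements is again a set with at most `k` elements.
-/

open Filter Set

theorem exists_preimage_eq_image {α β : Type*} {g : α → β} {F : Set α}
    (hsurj : Function.Surjective g) (hinj : InjOn g F) :
    ∃ f : β → α, ∀ B ⊆ F, f ⁻¹' B = g '' B := by
  have hpre (y : β) : ∃ a, g a = y ∧ (y ∈ g '' F → a ∈ F) := by
    by_cases hy : y ∈ g '' F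
    · obtain ⟨a, ha, rfl⟩ := hy
      exact ⟨a, rfl, fun _ => ha⟩
    · exact (hsurj y).imp fun a ha => ⟨ha, fun h => absurd h hy⟩
  choose f hgf hfF using hpre
  have hfg (a : α) (ha : a ∈ F) : f (g a) = a := hinj (hfF _ ⟨a, ha, rfl⟩) ha (hgf _)
  refine ⟨f, fun B hB => Subset.antisymm (fun y hy => ⟨f y, hy, hgf y⟩) ?_⟩
  rintro _ ⟨b, hb, rfl⟩
  rwa [mem_preimage, hfg b (hB hb)]

section Literals

/-- The literal over the atom `a` that prescribes the truth value `p` for it. -/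
def PropForm.literal {α : Type} (p : Prop) [Decidable p] (a : α) : PropForm α :=
  if p then .var a else neg (.var a)

variable {S : LambdaStructure Λ ar} {X : Type}

theorem osSatFin_literal {t : S.T X} {p : Prop} [Decidable p] {l : Λ × Finset X} :
    osSatFin S X t (.literal p l) ↔ (t ∈ S.lift l.1 X (fun _ => (l.2 : Set X)) ↔ p) := by
  by_cases hp : p <;> simp [PropForm.literal, PropForm.neg, osSatFin, pEval, hp]

theorem FinitaryOneStepCompact.exists_forall_mem_lift_iff (hcompact : FinitaryOneStepCompact S)
    {P : Λ × Finset X → Prop}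
    (hP : ∀ s : Set (Λ × Finset X), s.Finite →
      ∃ t : S.T X, ∀ l ∈ s, t ∈ S.lift l.1 X (fun _ => (l.2 : Set X)) ↔ P l) :
    ∃ t : S.T X, ∀ l : Λ × Finset X, t ∈ S.lift l.1 X (fun _ => (l.2 : Set X)) ↔ P l := by
  classical
  obtain ⟨t, ht⟩ := hcompact X (range fun l => .literal (P l) l) fun Φ hΦ hfin => by
    obtain ⟨s, rfl, hs⟩ := exists_image_eq_injOn_of_subset_range hΦ
    simpa only [forall_mem_image, osSatFin_literal] using hP s (hfin.of_finite_image hs)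
  exact ⟨t, fun l => osSatFin_literal.1 (ht _ (mem_range_self l))⟩

end Literals

section Coordinates

variable {I : Type} {𝔘 : Ultrafilter I} {X : I → Type}

theorem upMk_eq_upMk_iff {x y : ∀ i, X i} :
    upMk 𝔘 X x = upMk 𝔘 X y ↔ ∀ᶠ i in 𝔘, x i = y i :=
  Quotient.eq

theorem upMk_mem_admSet_iff {x : ∀ i, X i} {A : ∀ i, Set (X i)} :
    upMk 𝔘 X x ∈ admSet 𝔘 X A ↔ ∀ᶠ i in 𝔘, x i ∈ A i :=
  Iff.rfl

/-- The `i`-th coordinate of an element of the ultraproduct, read off a representative that is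
chosen once and for all. -/
noncomputable def UProd.coord (i : I) (c : UProd 𝔘 X) : X i :=
  Quotient.out c i

open UProd (coord)

theorem upMk_coord (c : UProd 𝔘 X) : upMk 𝔘 X (fun i => coord i c) = c :=
  Quotient.out_eq c

theorem eventually_coord_upMk (x : ∀ i, X i) : ∀ᶠ i in 𝔘, coord i (upMk 𝔘 X x) = x i :=
  upMk_eq_upMk_iff.1 (upMk_coord _)

theorem mem_admSet_iff {c : UProd 𝔘 X} {A : ∀ i, Set (X i)} :
    c ∈ admSet 𝔘 X A ↔ ∀ᶠ i in 𝔘, coord i c ∈ A i := by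
  rw [← upMk_mem_admSet_iff, upMk_coord]

theorem admSet_mono {A B : ∀ i, Set (X i)} (h : ∀ᶠ i in 𝔘, A i ⊆ B i) :
    admSet 𝔘 X A ⊆ admSet 𝔘 X B := fun _ hc =>
  mem_admSet_iff.2 <| (mem_admSet_iff.1 hc).mp <| h.mono fun _ hi ha => hi ha

theorem eventually_injOn_coord {F : Set (UProd 𝔘 X)} (hF : F.Finite) :
    ∀ᶠ i in 𝔘, InjOn (coord i) F := by
  refine (eventually_all_finite hF).2 fun b _ => (eventually_all_finite hF).2 fun c _ => ?_
  rw [Ultrafilter.eventually_imp, ← upMk_eq_upMk_iff, upMk_coord, upMk_coord]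
  exact fun h => .of_forall fun _ => h

theorem eventually_coord_image_subset {F : Set (UProd 𝔘 X)} (hF : F.Finite) {A : ∀ i, Set (X i)}
    (hFA : F ⊆ admSet 𝔘 X A) : ∀ᶠ i in 𝔘, coord i '' F ⊆ A i := by
  simp only [image_subset_iff]
  exact (eventually_all_finite hF).2 fun c hc => mem_admSet_iff.1 (hFA hc)

theorem encard_admSet_le {C : ∀ i, Set (X i)} {k : ℕ} (hC : ∀ᶠ i in 𝔘, (C i).encard ≤ k) :
    (admSet 𝔘 X C).encard ≤ k := by
  by_contra! hlt
  obtain ⟨F, hFC, hF⟩ := exists_subset_encard_eq (Order.add_one_le_of_lt hlt)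
  have hFfin : F.Finite := finite_of_encard_eq_coe (k := k + 1) hF
  obtain ⟨i, hinj, hsub, hle⟩ := ((eventually_injOn_coord hFfin).and
    ((eventually_coord_image_subset hFfin hFC).and hC)).exists
  have : (k + 1 : ℕ∞) ≤ k := calc
    (k + 1 : ℕ∞) = (coord i '' F).encard := by rw [hinj.encard_image, hF]
    _ ≤ (C i).encard := encard_le_encard hsub
    _ ≤ k := hle
  exact absurd this (by norm_cast; lia)

section Nonempty

variable [∀ i, Nonempty (X i)]

theorem eventually_subset_coord_image_admSet (A : ∀ i, Set (X i)) :
    ∀ᶠ i in 𝔘, A i ⊆ coord i '' admSet 𝔘 X A := by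
  by_contra hA
  simp_rw [← Ultrafilter.eventually_not, not_subset] at hA
  obtain ⟨y, hy⟩ := skolem.1 hA
  have hyA : upMk 𝔘 X y ∈ admSet 𝔘 X A := upMk_mem_admSet_iff.2 (hy.mono fun _ h => h.1)
  obtain ⟨i, hi, hyi⟩ := (hy.and (eventually_coord_upMk y)).exists
  exact hi.2 ⟨_, hyA, hyi⟩

theorem eventually_surjective_coord :
    ∀ᶠ i in 𝔘, Function.Surjective (coord i : UProd 𝔘 X → X i) :=
  (eventually_subset_coord_image_admSet fun _ => univ).mono fun _ hi y =>
    image_subset_range _ _ (hi (mem_univ y))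

theorem eventually_coord_image_admSet_eq {C : ∀ i, Set (X i)} (hC : (admSet 𝔘 X C).Finite) :
    ∀ᶠ i in 𝔘, coord i '' admSet 𝔘 X C = C i :=
  ((eventually_coord_image_subset hC Subset.rfl).and
    (eventually_subset_coord_image_admSet C)).mono fun _ hi => hi.1.antisymm hi.2

theorem eventually_exists_preimage_eq_coord_image {F : Set (UProd 𝔘 X)} (hF : F.Finite) :
    ∀ᶠ i in 𝔘, ∃ f : X i → UProd 𝔘 X, ∀ B ⊆ F, f ⁻¹' B = coord i '' B :=
  (eventually_surjective_coord.and (eventually_injOn_coord hF)).mono fun _ hi =>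
    exists_preimage_eq_image hi.1 hi.2

end Nonempty

end Coordinates

section OneStepUltraproduct

open UProd (coord)

variable {S : LambdaStructure Λ ar} {I : Type} {𝔘 : Ultrafilter I} {X : I → Type}
  [∀ i, Nonempty (X i)]

theorem FinitaryOneStepCompact.exists_mem_lift_finite_iff (hcompact : FinitaryOneStepCompact S)
    (t : ∀ i, S.T (X i)) :
    ∃ u : S.T (UProd 𝔘 X), ∀ (ℓ : Λ) (B : Set (UProd 𝔘 X)), B.Finite →
      (u ∈ S.lift ℓ _ (fun _ => B) ↔ ∀ᶠ i in 𝔘, t i ∈ S.lift ℓ (X i) (fun _ => coord i '' B)) := by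
  let P (l : Λ × Finset (UProd 𝔘 X)) (i : I) : Prop :=
    t i ∈ S.lift l.1 (X i) (fun _ => coord i '' (l.2 : Set (UProd 𝔘 X)))
  suffices h : ∃ u : S.T (UProd 𝔘 X), ∀ l : Λ × Finset (UProd 𝔘 X),
      u ∈ S.lift l.1 _ (fun _ => (l.2 : Set (UProd 𝔘 X))) ↔ ∀ᶠ i in 𝔘, P l i from
    h.imp fun u hu ℓ B hB => by simpa only [P, hB.coe_toFinset] using hu (ℓ, hB.toFinset)
  refine hcompact.exists_forall_mem_lift_iff fun s hs => ?_
  have hlimit : ∀ᶠ i in 𝔘, ∀ l ∈ s, P l i ↔ ∀ᶠ j in 𝔘, P l j := by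
    refine (eventually_all_finite hs).2 fun l _ => ?_
    by_cases hl : ∀ᶠ j in 𝔘, P l j
    · exact hl.mono fun _ hi => iff_of_true hi hl
    · exact (Ultrafilter.eventually_not.2 hl).mono fun _ hi => iff_of_false hi hl
  have hF : (⋃ l ∈ s, (l.2 : Set (UProd 𝔘 X))).Finite := hs.biUnion fun l _ => l.2.finite_toSet
  obtain ⟨i, hi, f, hf⟩ := (hlimit.and (eventually_exists_preimage_eq_coord_image hF)).exists
  refine ⟨S.map f (t i), fun l hl => ?_⟩
  rw [S.natural, hf _ (subset_biUnion_of_mem (u := fun l => (l.2 : Set (UProd 𝔘 X))) hl)]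
  exact hi l hl

theorem KBounded1.mem_lift_admSet_iff {ℓ : Λ} {k : ℕ} (hk : KBounded1 S ℓ k)
    {u : S.T (UProd 𝔘 X)} {t : ∀ i, S.T (X i)}
    (hu : ∀ B : Set (UProd 𝔘 X), B.Finite →
      (u ∈ S.lift ℓ _ (fun _ => B) ↔ ∀ᶠ i in 𝔘, t i ∈ S.lift ℓ (X i) (fun _ => coord i '' B)))
    (A : ∀ i, Set (X i)) :
    u ∈ S.lift ℓ _ (fun _ => admSet 𝔘 X A) ↔ ∀ᶠ i in 𝔘, t i ∈ S.lift ℓ (X i) (fun _ => A i) := by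
  constructor
  · intro h
    obtain ⟨B, hBA, hBfin, hBk, huB⟩ := (hk _ _ _).1 h
    filter_upwards [(hu B hBfin).1 huB, eventually_coord_image_subset hBfin hBA] with i hti hBi
    exact (hk _ _ _).2
      ⟨coord i '' B, hBi, hBfin.image _, (ncard_image_le hBfin).trans hBk, hti⟩
  · intro h
    obtain ⟨C, hC⟩ := skolem.1 (h.mono fun i => (hk (X i) (A i) (t i)).1)
    have hcard : (admSet 𝔘 X C).encard ≤ k := encard_admSet_le <| hC.mono
      fun _ ⟨_, hfin, hncard, _⟩ => encard_le_coe_iff_finite_ncard_le.2 ⟨hfin, hncard⟩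
    obtain ⟨hfin, hncard⟩ := encard_le_coe_iff_finite_ncard_le.1 hcard
    have hu_mem : u ∈ S.lift ℓ _ (fun _ => admSet 𝔘 X C) := by
      rw [hu _ hfin]
      filter_upwards [hC, eventually_coord_image_admSet_eq hfin] with i ⟨_, _, _, hti⟩ himage
      rwa [himage]
    exact (hk _ _ _).2
      ⟨admSet 𝔘 X C, admSet_mono (hC.mono fun _ hi => hi.1), hfin, hncard, hu_mem⟩

theorem FinitaryOneStepCompact.exists_mem_lift_admSet_iff (hcompact : FinitaryOneStepCompact S)
    (hbounded : ∀ ℓ : Λ, ∃ k : ℕ, KBounded1 S ℓ k) (t : ∀ i, S.T (X i)) :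
    ∃ u : S.T (UProd 𝔘 X), ∀ (ℓ : Λ) (A : ∀ i, Set (X i)),
      u ∈ S.lift ℓ _ (fun _ => admSet 𝔘 X A) ↔
        ∀ᶠ i in 𝔘, t i ∈ S.lift ℓ (X i) (fun _ => A i) := by
  obtain ⟨u, hu⟩ := hcompact.exists_mem_lift_finite_iff t
  refine ⟨u, fun ℓ => ?_⟩
  obtain ⟨k, hk⟩ := hbounded ℓ
  exact hk.mem_lift_admSet_iff (hu ℓ)

end OneStepUltraproduct

theorem qup_exists_of_finitary_onestep_compact_general (S : LambdaStructure Λ ar)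
    (hcompact : FinitaryOneStepCompact S)
    (hbounded : ∀ ℓ : Λ, ∃ k : ℕ, KBounded1 S ℓ k)
    {I : Type} (𝔘 : Ultrafilter I) (X : I → Type) (ξi : ∀ i, X i → S.T (X i)) :
    ∃ ξ : UProd 𝔘 X → S.T (UProd 𝔘 X), IsQUPCoalg S 𝔘 X ξi ξ := by
  have hbehaviour (c : UProd 𝔘 X) : ∃ u : S.T (UProd 𝔘 X), ∀ (ℓ : Λ) (A : ∀ i, Set (X i)),
      u ∈ S.lift ℓ _ (fun _ => admSet 𝔘 X A) ↔
        ∀ᶠ i in 𝔘, ξi i (c.coord i) ∈ S.lift ℓ (X i) (fun _ => A i) :=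
    have (i : I) : Nonempty (X i) := ⟨c.coord i⟩
    hcompact.exists_mem_lift_admSet_iff hbounded _
  choose ξ hξ using hbehaviour
  refine ⟨ξ, fun A x ℓ => (hξ _ ℓ A).trans (eventually_congr ?_)⟩
  filter_upwards [eventually_coord_upMk x] with i hi
  rw [hi]

/-- **Existence of quasi-ultraproducts under finitary one-step compactness and
boundedness** (Thm. 5.7): if a `Λ`-structure (with all operators unary) is finitary one-step
compact and every operator is `k_♥`-bounded for some `k_♥ ∈ ℕ`, then for every ultrafilter
`𝔘` and every family of `T`-coalgebras on nonempty sets there is a coalgebra structure on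
the ultraproduct making it a quasi-ultraproduct. -/
theorem qup_exists_of_finitary_onestep_compact (S : LambdaStructure Λ ar)
    (hunary : ∀ ℓ : Λ, ar ℓ = 1)
    (hcompact : FinitaryOneStepCompact S)
    (hbounded : ∀ ℓ : Λ, ∃ k : ℕ, KBounded1 S ℓ k)
    {I : Type} (𝔘 : Ultrafilter I) (X : I → Type) (hne : ∀ i, Nonempty (X i))
    (ξi : ∀ i, X i → S.T (X i)) :
    ∃ ξ : UProd 𝔘 X → S.T (UProd 𝔘 X), IsQUPCoalg S 𝔘 X ξi ξ :=
  qup_exists_of_finitary_onestep_compact_general S hcompact hbounded 𝔘 X ξi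

end CPL
end

section
/- Downward Löwenheim–Skolem Theorem (one-step compact case): Over any one-step compact Λ-structure (with all operators unary), CPL(Λ,Σ) satisfies the downward Löwenheim–Skolem theorem: every coalgebraic model of infinite cardinality κ has, for every infinite cardinal λ ≤ κ (with λ at least the cardinality of the language), an elementary substructure of cardinality λ. -/
namespace CPL

variable {Λ : Type} {ar : Λ → ℕ} {Sig : Type} {arP : Sig → ℕ} {V : Type}

variable [DecidableEq V]

variable {Λ : Type} {ar : Λ → ℕ} {sVar : Type}

/-!
Name every CPL formula by a first-order relation symbol, so that all sets definable in the model
`(C, γ, I)` become first-order definable. The classical downward Löwenheim–Skolem theorem then gives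
`Y ⊆ C` of cardinality `λ` such that any point of `C` can be matched by a point of `Y` on finitely
many sets definable with parameters in `Y`. Matching every point at once defines a map `f : C → Y`,
and by naturality `T f (γ y)` behaves on those finitely many sets as `γ y` does; hence the one-step
theory that `γ y` induces on `Y` is finitely satisfiable, and any `ζ y` realizing it works.
-/

section FiniteDensity

open FirstOrder Set

variable {C : Type*}

/-- `Y` is finitely dense for `𝒟`: finitely many members of `𝒟` never separate a point of the
ambient set from all points of `Y`. Equivalently, `Y` is dense in the topology generated by the
members of `𝒟` and their complements. -/
def FinitelyDense (𝒟 : Set (Set C)) (Y : Set C) : Prop :=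
  ∀ F ⊆ 𝒟, F.Finite → ∀ c, ∃ y ∈ Y, ∀ A ∈ F, y ∈ A ↔ c ∈ A

theorem FinitelyDense.mono {𝒟 ℰ : Set (Set C)} {Y : Set C} (h : 𝒟 ⊆ ℰ) (hY : FinitelyDense ℰ Y) :
    FinitelyDense 𝒟 Y :=
  fun F hF => hY F (hF.trans h)

theorem FinitelyDense.eq_univ_of_subset {𝒟 : Set (Set C)} {Y A : Set C} (hY : FinitelyDense 𝒟 Y)
    (hA : A ∈ 𝒟) (hYA : Y ⊆ A) : A = univ := by
  refine eq_univ_of_forall fun c => ?_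
  obtain ⟨y, hyY, hy⟩ := hY {A} (singleton_subset_iff.2 hA) (finite_singleton A) c
  exact (hy A rfl).1 (hYA hyY)

theorem finitelyDense_of_meetsDefinable {L : Language} [L.Structure C] {Y : Set C}
    (hY : L.MeetsDefinable Y) : FinitelyDense {A | Y.Definable₁ L A} Y := by
  intro F hF hfin c
  have : Finite F := hfin
  have hdef (A : F) : Y.Definable₁ L {y | y ∈ A.1 ↔ c ∈ A.1} := by
    by_cases hc : c ∈ A.1
    · simp only [hc, iff_true]
      exact hF A.2
    · simp only [hc, iff_false]
      exact Definable.compl (hF A.2)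
  have hinter : Y.Definable₁ L (⋂ A : F, {y | y ∈ A.1 ↔ c ∈ A.1}) := by
    simpa only [Definable₁, mem_iInter, ofPred_forall] using definable_iInter_of_finite hdef
  obtain ⟨y, hy, hyY⟩ := hY _ ⟨c, mem_iInter.2 fun _ => Iff.rfl⟩ hinter
  exact ⟨y, hyY, fun A hA => mem_iInter.1 hy ⟨A, hA⟩⟩

end FiniteDensity

section DefinableSets

open Cardinal FirstOrder Function

variable {Sig : Type} {arP : Sig → ℕ} {V : Type}

theorem Formula.finite_freeVars (φ : Formula Λ ar Sig arP V) : φ.freeVars.Finite := by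
  induction φ with
  | eq a b => exact Set.toFinite {a, b}
  | pred P xs => exact Set.finite_range xs
  | bot => exact Set.finite_empty
  | imp φ ψ ihφ ihψ => exact ihφ.union ihψ
  | all x φ ih => exact ih.sdiff
  | heart x ℓ ys φs ih => exact (Set.finite_iUnion fun i => (ih i).sdiff).insert x

/-- The relational first-order language naming CPL formulas: an `n`-ary symbol is a formula together
with a choice of the variable standing at each of the `n` argument places. -/
def formulaLanguage (Λ : Type) (ar : Λ → ℕ) (Sig : Type) (arP : Sig → ℕ) (V : Type) : Language where
  Functions _ := Empty
  Relations n := Formula Λ ar Sig arP V × (Fin n → V)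

theorem card_formulaLanguage_le {lam : Cardinal} (hlam : ℵ₀ ≤ lam)
    (hlang : #(Formula Λ ar Sig arP V) ≤ lam) : (formulaLanguage Λ ar Sig arP V).card ≤ lam := by
  have hV : #V ≤ lam := hlang.trans' <|
    mk_le_of_injective (f := fun x => Formula.eq x x) fun _ _ h => (Formula.eq.inj h).1
  have hrel (n : ℕ) : #((formulaLanguage Λ ar Sig arP V).Relations n) ≤ lam := by
    simp only [formulaLanguage, mk_prod, lift_id, mk_arrow, mk_fin, power_natCast]
    calc #(Formula Λ ar Sig arP V) * #V ^ n
      _ ≤ lam * lam := mul_le_mul' hlang ((pow_le_pow_left' hV n).trans (power_nat_le hlam))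
      _ = lam := mul_eq_self hlam
  have hfun (n : ℕ) : #((formulaLanguage Λ ar Sig arP V).Functions n) = 0 := mk_empty
  rw [Language.card_eq_card_functions_add_card_relations]
  simp only [hfun, lift_id, sum_const, mul_zero, zero_add]
  calc (sum fun n => #((formulaLanguage Λ ar Sig arP V).Relations n))
    _ ≤ #ℕ * ⨆ n, #((formulaLanguage Λ ar Sig arP V).Relations n) := sum_le_mk_mul_iSup _
    _ ≤ lam * lam := mul_le_mul' (mk_nat.le.trans hlam) (ciSup_le' hrel)
    _ = lam := mul_eq_self hlam

theorem eqOn_update_of_eqOn_sdiff {α β : Type*} [DecidableEq α] {v w : α → β} {s : Set α}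
    {x : α} (h : Set.EqOn v w (s \ {x})) (c : β) : Set.EqOn (update v x c) (update w x c) s := by
  intro y hy
  rcases eq_or_ne y x with rfl | hyx
  · simp
  · simpa [hyx] using h ⟨hy, hyx⟩

variable [DecidableEq V] (S : LambdaStructure Λ ar) {C : Type} (γ : C → S.T C)
  (I : (P : Sig) → (Fin (arP P) → C) → Prop)

theorem sat_congr {φ : Formula Λ ar Sig arP V} {v w : V → C} (h : Set.EqOn v w φ.freeVars) :
    Sat S γ I v φ ↔ Sat S γ I w φ := by
  induction φ generalizing v w with
  | eq a b => simp only [Sat, h (show a ∈ {a, b} by simp), h (show b ∈ {a, b} by simp)]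
  | pred P xs => simp only [Sat, h (Set.mem_range_self _)]
  | bot => rfl
  | imp φ ψ ihφ ihψ =>
    exact imp_congr (ihφ (h.mono Set.subset_union_left)) (ihψ (h.mono Set.subset_union_right))
  | all x φ ih => exact forall_congr' fun c => ih (eqOn_update_of_eqOn_sdiff h c)
  | heart x ℓ ys φs ih =>
    have harg (i : Fin (ar ℓ)) (c : C) :
        Sat S γ I (update v (ys i) c) (φs i) ↔ Sat S γ I (update w (ys i) c) (φs i) :=
      ih i <| eqOn_update_of_eqOn_sdiff
        (h.mono fun _ hy => Set.mem_insert_of_mem x (Set.mem_iUnion_of_mem i hy)) c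
    simp only [Sat, h (Set.mem_insert _ _), harg]

/-- The coalgebraic model `(C, γ, I)` as a first-order structure for `formulaLanguage`. The
existential over valuations makes `(φ, xs)` express `φ` as soon as `xs` lists all free variables
of `φ`. -/
abbrev formulaStructure : (formulaLanguage Λ ar Sig arP V).Structure C where
  funMap f := f.elim
  RelMap R a := ∃ v, (fun i => v (R.2 i)) = a ∧ Sat S γ I v R.1

theorem relMap_formulaStructure_iff {n : ℕ} {φ : Formula Λ ar Sig arP V} {xs : Fin n → V}
    (hxs : φ.freeVars ⊆ Set.range xs) (v : V → C) :
    (formulaStructure S γ I).RelMap (φ, xs) (fun i => v (xs i)) ↔ Sat S γ I v φ := by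
  refine ⟨fun ⟨w, hwv, hw⟩ => (sat_congr S γ I fun x hx => ?_).1 hw, fun h => ⟨v, rfl, h⟩⟩
  obtain ⟨i, rfl⟩ := hxs hx
  exact congrFun hwv i

/-- The subsets of `C` defined in the coalgebraic model `(C, γ, I)` by a CPL formula over `V` with
one distinguished variable, its other free variables being interpreted by parameters from `Y`. -/
def definableSets (V : Type) [DecidableEq V] (Y : Set C) : Set (Set C) :=
  {A | ∃ (φ : Formula Λ ar Sig arP V) (z : V) (v : V → Y),
    A = {c | Sat S γ I (update (fun x => (v x : C)) z c) φ}}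

theorem definable₁_of_mem_definableSets {Y A : Set C} (hA : A ∈ definableSets S γ I V Y) :
    letI := formulaStructure (V := V) S γ I
    Y.Definable₁ (formulaLanguage Λ ar Sig arP V) A := by
  let _ := formulaStructure (V := V) S γ I
  obtain ⟨φ, z, v, rfl⟩ := hA
  obtain ⟨n, xs, -, hxs⟩ := φ.finite_freeVars.fin_param
  let R : (formulaLanguage Λ ar Sig arP V).Relations n := (φ, xs)
  let place (x : V) : Y ⊕ Fin 1 := if x = z then .inr 0 else .inl (v x)
  refine Set.definable_iff_exists_formula_sum.2
    ⟨R.formula fun i => .var (place (xs i)), Set.ext fun a => ?_⟩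
  have hplace : (fun x => Sum.elim (↑) a (place x)) = update (fun x => (v x : C)) z (a 0) := by
    funext x
    by_cases hx : x = z <;> simp [place, hx]
  simp only [Set.mem_ofPred_eq, Language.Formula.realize_rel, ← hplace]
  exact (relMap_formulaStructure_iff S γ I hxs.ge _).symm

theorem exists_mk_eq_finitelyDense_definableSets {lam : Cardinal} (hlam : ℵ₀ ≤ lam)
    (hlamC : lam ≤ #C) (hlang : #(Formula Λ ar Sig arP V) ≤ lam) :
    ∃ Y : Set C, #Y = lam ∧ FinitelyDense (definableSets S γ I V Y) Y := by
  let _ := formulaStructure (V := V) S γ I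
  obtain ⟨N, -, hN⟩ := Language.exists_elementarySubstructure_card_eq
    (formulaLanguage Λ ar Sig arP V) (∅ : Set C) lam hlam (by simp)
    (by simpa using card_formulaLanguage_le hlam hlang) (by simpa using hlamC)
  exact ⟨N, by simpa using hN, (finitelyDense_of_meetsDefinable N.meetsDefinable).mono fun _ hA =>
    definable₁_of_mem_definableSets S γ I hA⟩

variable {S γ I}

theorem sat_restrict_iff {Y : Set C} {ζ : Y → S.T Y}
    (hY : ∀ A ∈ definableSets S γ I V Y, Y ⊆ A → A = Set.univ)
    (hζ : ∀ (y : Y) (ℓ : Λ) (A : Fin (ar ℓ) → Set C), (∀ i, A i ∈ definableSets S γ I V Y) →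
      (ζ y ∈ S.lift ℓ Y (fun i => (↑) ⁻¹' A i) ↔ γ y ∈ S.lift ℓ C A))
    (φ : Formula Λ ar Sig arP V) (v : V → Y) :
    Sat S ζ (fun P cs => I P fun j => (cs j : C)) v φ ↔ Sat S γ I (fun x => (v x : C)) φ := by
  have hupdate (v : V → Y) (x : V) (c : Y) :
      (fun y => (update v x c y : C)) = update (fun y => (v y : C)) x c :=
    comp_update _ v x c
  induction φ generalizing v with
  | eq a b => exact Subtype.ext_iff
  | pred P xs => rfl
  | bot => rfl
  | imp φ ψ ihφ ihψ => exact imp_congr (ihφ v) (ihψ v)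
  | all x φ ih =>
    have hsub := hY _ ⟨φ, x, v, rfl⟩
    simp only [Sat, ih, hupdate]
    exact ⟨fun h c => Set.eq_univ_iff_forall.1 (hsub fun y hy => h ⟨y, hy⟩) c, fun h c => h c⟩
  | heart x ℓ ys φs ih =>
    simp only [Sat, ih, hupdate]
    exact hζ (v x) ℓ _ fun i => ⟨φs i, ys i, v, rfl⟩

end DefinableSets

section OneStep

variable {S : LambdaStructure Λ ar}

theorem OneStepCompact.exists_forall_mem_lift_iff (hS : OneStepCompact S) {X ι : Type}
    (ℓ : ι → Λ) (A : ι → Set X) (p : ι → Prop)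
    (hfin : ∀ J : Set ι, J.Finite → ∃ t : S.T X, ∀ j ∈ J, t ∈ S.lift (ℓ j) X (fun _ => A j) ↔ p j) :
    ∃ t : S.T X, ∀ j, t ∈ S.lift (ℓ j) X (fun _ => A j) ↔ p j := by
  classical
  let literal (j : ι) : PropForm (Λ × Set X) :=
    if p j then .var (ℓ j, A j) else (PropForm.var (ℓ j, A j)).neg
  have osSat_literal (t : S.T X) (j : ι) :
      osSat S X t (literal j) ↔ (t ∈ S.lift (ℓ j) X (fun _ => A j) ↔ p j) := by
    by_cases hp : p j <;> simp [literal, hp, osSat, pEval, PropForm.neg]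
  obtain ⟨t, ht⟩ := hS X (Set.range literal) fun Φ₀ hΦ₀ hfinite => by
    rw [← Set.image_univ] at hΦ₀
    obtain ⟨J, -, hJ, rfl⟩ := Set.exists_subset_image_finite_and.1 ⟨Φ₀, hΦ₀, hfinite, rfl⟩
    obtain ⟨t, ht⟩ := hfin J hJ
    exact ⟨t, Set.forall_mem_image.2 fun j hj => (osSat_literal t j).2 (ht j hj)⟩
  exact ⟨t, fun j => (osSat_literal t j).1 (ht _ (Set.mem_range_self j))⟩

theorem OneStepCompact.exists_forall_mem_lift_preimage_iff (hS : OneStepCompact S) {C : Type}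
    {𝒟 : Set (Set C)} {Y : Set C} (hY : FinitelyDense 𝒟 Y) (t : S.T C) :
    ∃ s : S.T Y, ∀ (ℓ : Λ), ∀ A ∈ 𝒟,
      s ∈ S.lift ℓ Y (fun _ => (↑) ⁻¹' A) ↔ t ∈ S.lift ℓ C (fun _ => A) := by
  obtain ⟨s, hs⟩ := hS.exists_forall_mem_lift_iff
    (fun j : Λ × 𝒟 => j.1) (fun j => ((↑) : Y → C) ⁻¹' j.2)
    (fun j => t ∈ S.lift j.1 C fun _ => j.2) fun J hJ => by
      choose f hfY hf using hY ((fun j : Λ × 𝒟 => (j.2 : Set C)) '' J)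
        (Set.image_subset_iff.2 fun j _ => j.2.2) (hJ.image _)
      refine ⟨S.map (fun c => ⟨f c, hfY c⟩) t, fun j hj => ?_⟩
      have htrace : f ⁻¹' j.2 = j.2 := Set.ext fun c => hf c _ (Set.mem_image_of_mem _ hj)
      rw [S.natural, ← Set.preimage_comp]
      exact iff_of_eq (congrArg (fun B => t ∈ S.lift j.1 C fun _ => B) htrace)
  exact ⟨s, fun ℓ A hA => hs (ℓ, ⟨A, hA⟩)⟩

end OneStep

/-- **Downward Löwenheim–Skolem Theorem, one-step compact case** (Thm. 5.11): over any
one-step compact `Λ`-structure (with all operators unary), every coalgebraic model of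
infinite cardinality `κ` has, for every infinite cardinal `λ ≤ κ` that is at least the
cardinality of the language, an elementary substructure of cardinality `λ` (the coalgebra
structure on the substructure need not be a subcoalgebra). -/
theorem downward_lowenheim_skolem_onestep_compact [DecidableEq V]
    (S : LambdaStructure Λ ar)
    (hunary : ∀ ℓ : Λ, ar ℓ = 1)
    (hcompact : OneStepCompact S)
    (C : Type) (γ : C → S.T C) (I : (P : Sig) → (Fin (arP P) → C) → Prop)
    (hinf : Cardinal.aleph0 ≤ Cardinal.mk C)
    (lam : Cardinal) (hlam0 : Cardinal.aleph0 ≤ lam) (hlamC : lam ≤ Cardinal.mk C)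
    (hlang : Cardinal.mk (Formula Λ ar Sig arP V) ≤ lam) :
    ∃ (Y : Set C) (ζ : Y → S.T Y),
      Cardinal.mk Y = lam ∧
      ∀ (φ : Formula Λ ar Sig arP V) (v : V → Y),
        Sat S ζ (fun P cs => I P fun j => ((cs j : Y) : C)) v φ ↔
          Sat S γ I (fun x => ((v x : Y) : C)) φ := by
  obtain ⟨Y, hYlam, hY⟩ := exists_mk_eq_finitelyDense_definableSets S γ I hlam0 hlamC hlang
  choose ζ hζ using fun y : Y => hcompact.exists_forall_mem_lift_preimage_iff hY (γ y)
  refine ⟨Y, ζ, hYlam, sat_restrict_iff (fun A hA => hY.eq_univ_of_subset hA) fun y ℓ A hA => ?_⟩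
  let _ : Unique (Fin (ar ℓ)) := hunary ℓ ▸ inferInstance
  obtain ⟨B, rfl⟩ : ∃ B, A = fun _ => B :=
    ⟨A default, funext fun i => congrArg A (Unique.eq_default i)⟩
  exact hζ y ℓ B (hA default)

end CPL
end
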